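/- arXiv:1007.0912 — 2 statements merged into one kernel-verified Lean document; each statement's English description precedes it below -/
import Mathlib

section
/- The function f is a first integral of V, i.e., ⟨V(x), ∇f(x)⟩ = 0 for all x ∈ Ω, if and only if |f(x)|^{r} · div W(x) = div V(x) for every x ∈ Ω \ Γ. -/
open Filter Topology

/-- Partial derivative of `g : ℝⁿ → ℝ` in the `i`-th coordinate direction. -/
noncomputable def pderiv' {n : ℕ} (g : (Fin n → ℝ) → ℝ) (i : Fin n) (x : Fin n → ℝ) : ℝ :=
  fderiv ℝ g x (Pi.single i 1)

/-- Divergence of a vector field on ℝⁿ. -/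
noncomputable def diverg {n : ℕ} (V : (Fin n → ℝ) → (Fin n → ℝ)) (x : Fin n → ℝ) : ℝ :=
  ∑ i, pderiv' (fun y => V y i) i x

/-- Gradient of `g : ℝⁿ → ℝ`. -/
noncomputable def grad' {n : ℕ} (g : (Fin n → ℝ) → ℝ) (x : Fin n → ℝ) : Fin n → ℝ :=
  fun i => pderiv' g i x

/-- The Euclidean inner product on ℝⁿ. -/
noncomputable def dotp {n : ℕ} (u w : Fin n → ℝ) : ℝ := ∑ i, u i * w i

/-- Condition (A): for every `x* ∈ Γ`, `|f x|^(r+1) · div W x → 0` as `x → x*`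
with `x ∈ Ω \ Γ`. -/
def CondA {n : ℕ} (Ω Γ : Set (Fin n → ℝ)) (f : (Fin n → ℝ) → ℝ) (r : ℝ)
    (W : (Fin n → ℝ) → (Fin n → ℝ)) : Prop :=
  ∀ xs ∈ Γ, Filter.Tendsto (fun x => |f x| ^ (r + 1) * diverg W x)
    (nhdsWithin xs (Ω \ Γ)) (nhds 0)

/-- Condition (B): for every `x* ∈ Γ` with `V x* = 0`, one has
`|f x|^r · div W x → 0` and `|f x|^(r+1) · ∂(div W)/∂x_i x → 0` as `x → x*`
with `x ∈ Ω \ Γ`, for each `i`. -/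
def CondB {n : ℕ} (Ω Γ : Set (Fin n → ℝ)) (f : (Fin n → ℝ) → ℝ) (r : ℝ)
    (V W : (Fin n → ℝ) → (Fin n → ℝ)) : Prop :=
  ∀ xs ∈ Γ, V xs = 0 →
    Filter.Tendsto (fun x => |f x| ^ r * diverg W x) (nhdsWithin xs (Ω \ Γ)) (nhds 0) ∧
    ∀ i : Fin n, Filter.Tendsto (fun x => |f x| ^ (r + 1) * pderiv' (diverg W) i x)
      (nhdsWithin xs (Ω \ Γ)) (nhds 0)

/-!
Differentiating `|f|^(-r) V` off the zero set gives
`|f|^r div (|f|^(-r) V) = div V - (r / f) ⟨V, ∇f⟩`, so the two conditions agree where `f ≠ 0`.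
A zero of `f` either has a neighbourhood on which `f` vanishes, and then `∇f = 0` there, or is a
limit of points with `f ≠ 0`, and then `⟨V, ∇f⟩ = 0` passes to the limit.
-/

theorem hasDerivAt_abs_rpow_of_ne_zero {t : ℝ} (ht : t ≠ 0) (p : ℝ) :
    HasDerivAt (fun u : ℝ => |u| ^ p) (p * |t| ^ p / t) t := by
  have habs : |t| ≠ 0 := abs_ne_zero.mpr ht
  convert (hasDerivAt_abs ht).rpow_const (p := p) (Or.inl habs) using 1
  rw [Real.rpow_sub_one habs]
  field_simp
  rw [mul_assoc, self_mul_sign]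

section NormedSpace

variable {𝕜 E F : Type*} [NontriviallyNormedField 𝕜] [NormedAddCommGroup E] [NormedSpace 𝕜 E]
  [NormedAddCommGroup F] [NormedSpace 𝕜 F]

theorem fderiv_apply_eq_zero_of_eventually_ne_zero {f : E → F} {V : E → E} {x : E}
    (hf : ContinuousAt (fderiv 𝕜 f) x) (hV : ContinuousAt V x)
    (h : ∀ᶠ y in 𝓝 x, f y ≠ 0 → fderiv 𝕜 f y (V y) = 0) : fderiv 𝕜 f x (V x) = 0 := by
  by_contra hx
  have hne : ∀ᶠ y in 𝓝 x, fderiv 𝕜 f y (V y) ≠ 0 := (hf.clm_apply hV).eventually_ne hx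
  have hzero : f =ᶠ[𝓝 x] fun _ => 0 := by
    filter_upwards [h, hne] with y hy hy'
    exact not_not.mp (mt hy hy')
  exact hx (by simp [hzero.fderiv_eq])

end NormedSpace

section Divergence

variable {n : ℕ} {f : (Fin n → ℝ) → ℝ} {V W : (Fin n → ℝ) → (Fin n → ℝ)} {x : Fin n → ℝ}

theorem dotp_grad' (v : Fin n → ℝ) (f : (Fin n → ℝ) → ℝ) (x : Fin n → ℝ) :
    dotp v (grad' f x) = fderiv ℝ f x v := by
  simp only [dotp, grad', pderiv', ← smul_eq_mul, ← map_smul, ← map_sum]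
  rw [← pi_eq_sum_univ' v]

theorem diverg_congr_of_eventuallyEq (h : V =ᶠ[𝓝 x] W) : diverg V x = diverg W x :=
  Finset.sum_congr rfl fun i _ => DFunLike.congr_fun (h.fun_comp fun v => v i).fderiv_eq _

theorem diverg_smul (hf : DifferentiableAt ℝ f x) (hV : DifferentiableAt ℝ V x) :
    diverg (fun y => f y • V y) x = f x * diverg V x + fderiv ℝ f x (V x) := by
  have hcomp (i : Fin n) : pderiv' (fun y => (f y • V y) i) i x =
      f x * pderiv' (fun y => V y i) i x + V x i * pderiv' f i x := by
    simp only [pderiv', Pi.smul_apply, smul_eq_mul]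
    rw [fderiv_fun_mul hf (differentiableAt_pi.mp hV i)]
    rfl
  simp only [← dotp_grad', diverg, dotp, grad', hcomp, Finset.sum_add_distrib, Finset.mul_sum]

theorem abs_rpow_mul_diverg_abs_rpow_neg_smul (hf : DifferentiableAt ℝ f x)
    (hV : DifferentiableAt ℝ V x) (hfx : f x ≠ 0) (r : ℝ) :
    |f x| ^ r * diverg (fun y => |f y| ^ (-r) • V y) x =
      diverg V x - r / f x * fderiv ℝ f x (V x) := by
  have hpow : HasFDerivAt (fun y => |f y| ^ (-r))
      ((-r * |f x| ^ (-r) / f x) • fderiv ℝ f x) x :=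
    (hasDerivAt_abs_rpow_of_ne_zero hfx (-r)).comp_hasFDerivAt x hf.hasFDerivAt
  have hcancel : |f x| ^ r * |f x| ^ (-r) = 1 := by
    rw [← Real.rpow_add (abs_pos.mpr hfx), add_neg_cancel, Real.rpow_zero]
  rw [diverg_smul hpow.differentiableAt hV, hpow.fderiv, smul_apply, smul_eq_mul]
  linear_combination (diverg V x - r / f x * fderiv ℝ f x (V x)) * hcancel

theorem abs_rpow_mul_diverg_abs_rpow_neg_smul_eq_diverg_iff (hf : DifferentiableAt ℝ f x)
    (hV : DifferentiableAt ℝ V x) (hfx : f x ≠ 0) {r : ℝ} (hr : r ≠ 0) :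
    |f x| ^ r * diverg (fun y => |f y| ^ (-r) • V y) x = diverg V x ↔
      fderiv ℝ f x (V x) = 0 := by
  rw [abs_rpow_mul_diverg_abs_rpow_neg_smul hf hV hfx, sub_eq_self,
    mul_eq_zero_iff_left (div_ne_zero hr hfx)]

end Divergence

theorem stmt2_general {n : ℕ} {Ω Γ : Set (Fin n → ℝ)} (hΩ : IsOpen Ω)
    {f : (Fin n → ℝ) → ℝ} (hf : ContDiffOn ℝ 1 f Ω) (hΓ : Γ = {x | x ∈ Ω ∧ f x = 0})
    {V : (Fin n → ℝ) → (Fin n → ℝ)} (hV : DifferentiableOn ℝ V Ω) {r : ℝ} (hr : r ≠ 0)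
    {W : (Fin n → ℝ) → (Fin n → ℝ)} (hW : ∀ x ∈ Ω \ Γ, W x = |f x| ^ (-r) • V x) :
    (∀ x ∈ Ω, dotp (V x) (grad' f x) = 0) ↔
      (∀ x ∈ Ω \ Γ, |f x| ^ r * diverg W x = diverg V x) := by
  have hmem (x) : x ∈ Ω \ Γ ↔ x ∈ Ω ∧ f x ≠ 0 := by grind
  have hfd : DifferentiableOn ℝ f Ω := hf.differentiableOn one_ne_zero
  have hopen : IsOpen (Ω \ Γ) := by
    rw [show Ω \ Γ = Ω ∩ f ⁻¹' {0}ᶜ from Set.ext hmem]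
    exact hfd.continuousOn.isOpen_inter_preimage hΩ isOpen_compl_singleton
  have hoff (x) (hx : x ∈ Ω \ Γ) :
      |f x| ^ r * diverg W x = diverg V x ↔ fderiv ℝ f x (V x) = 0 := by
    rw [diverg_congr_of_eventuallyEq (eventually_of_mem (hopen.mem_nhds hx) hW)]
    exact abs_rpow_mul_diverg_abs_rpow_neg_smul_eq_diverg_iff
      (hfd.differentiableAt (hΩ.mem_nhds hx.1)) (hV.differentiableAt (hΩ.mem_nhds hx.1))
      ((hmem x).mp hx).2 hr
  simp only [dotp_grad']
  refine ⟨fun h x hx => (hoff x hx).mpr (h x hx.1), fun h x hx => ?_⟩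
  refine fderiv_apply_eq_zero_of_eventually_ne_zero
    ((hf.continuousOn_fderiv_of_isOpen hΩ le_rfl).continuousAt (hΩ.mem_nhds hx))
    (hV.continuousOn.continuousAt (hΩ.mem_nhds hx)) ?_
  filter_upwards [hΩ.mem_nhds hx] with y hy hfy
  have hyΓ : y ∈ Ω \ Γ := (hmem y).mpr ⟨hy, hfy⟩
  exact (hoff y hyΓ).mp (h y hyΓ)

/-- `f` is a first integral of `V` (i.e. `⟨V x, ∇f x⟩ = 0` for all `x ∈ Ω`) iff
`|f x|^r · div W x = div V x` for every `x ∈ Ω \ Γ`. -/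
theorem stmt2 {n : ℕ} (hn : 2 ≤ n) (Ω Γ : Set (Fin n → ℝ)) (hΩ : IsOpen Ω)
    (f : (Fin n → ℝ) → ℝ) (s : ℕ) (hs : 2 ≤ s) (hf : ContDiffOn ℝ s f Ω)
    (hΓ : Γ = {x | x ∈ Ω ∧ f x = 0}) (hΓne : Γ.Nonempty)
    (hreg : ∀ x ∈ Γ, grad' f x ≠ 0)
    (V : (Fin n → ℝ) → (Fin n → ℝ)) (hV : ContDiffOn ℝ s V Ω)
    (r : ℝ) (hr : 0 < r)
    (W : (Fin n → ℝ) → (Fin n → ℝ))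
    (hW : ∀ x ∈ Ω \ Γ, W x = |f x| ^ (-r) • V x) :
    (∀ x ∈ Ω, dotp (V x) (grad' f x) = 0) ↔
      (∀ x ∈ Ω \ Γ, |f x| ^ r * diverg W x = diverg V x) :=
  stmt2_general hΩ (hf.of_le (by exact_mod_cast one_le_two.trans hs)) hΓ
    (hV.differentiableOn (by exact_mod_cast (two_pos.trans_le hs).ne')) hr.ne' hW
end

section
/- Let φ : Ω → ℝ be a C^s function with φ(x) ≠ 0 for every x ∈ Ω. If Conditions (A) and (B) hold for the pair of vector fields V and W = |f|^{−r} V, then Conditions (A) and (B) also hold for the pair φV and φW = |f|^{−r}(φV). That is, the main assumptions are invariant with respect to multiplication of the vector fields by a nonvanishing C^s scalar factor. -/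
/-!
Write `D = div W`. By the Leibniz rule `div (φW) = φ D + ∇φ · W`, a weight `c` for which `c D` and
`c W` tend to zero also makes `c div (φW)` tend to zero. Since `|f|^r W = V` and
`|f|^(r+1) W = |f| V`, this gives (A), and at the zeros of `V` the first half of (B).
Differentiating the Leibniz rule once more, the second half of (B) reduces to `|f|^(r+1) ∂ᵢW → 0`
at the zeros of `V`. This holds because differentiating `|f|^(-r)` costs at most one factor
`|f|⁻¹`, which the weight `|f|^(r+1)` absorbs, while `V` itself tends to zero.
-/

open Filter Topology

section Weight

variable {E F : Type*} [NormedAddCommGroup E] [NormedSpace ℝ E] [NormedAddCommGroup F]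
  [NormedSpace ℝ F] {f : E → ℝ} {u : E → F} {x : E}

theorem hasFDerivAt_abs_rpow_smul {f' : E →L[ℝ] ℝ} {u' : E →L[ℝ] F} (hf : HasFDerivAt f f' x)
    (hu : HasFDerivAt u u' x) (hx : f x ≠ 0) (p : ℝ) :
    HasFDerivAt (fun y => |f y| ^ p • u y)
      (|f x| ^ p • u' + ((p * |f x| ^ (p - 1)) • (SignType.sign (f x) : ℝ) • f').smulRight (u x))
      x :=
  ((hf.abs hx).rpow_const (.inl (abs_ne_zero.2 hx))).fun_smul hu

theorem contDiffAt_abs_rpow_smul {k : ℕ∞} (hf : ContDiffAt ℝ k f x)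
    (hu : ContDiffAt ℝ k u x) (hx : f x ≠ 0) (p : ℝ) :
    ContDiffAt ℝ k (fun y => |f y| ^ p • u y) x :=
  ((hf.abs hx).rpow_const_of_ne (abs_ne_zero.2 hx)).smul hu

theorem norm_abs_rpow_smul_fderiv_abs_rpow_neg_smul_le (hf : DifferentiableAt ℝ f x)
    (hu : DifferentiableAt ℝ u x) (hx : f x ≠ 0) (r : ℝ) :
    ‖|f x| ^ (r + 1) • fderiv ℝ (fun y => |f y| ^ (-r) • u y) x‖ ≤
      |f x| * ‖fderiv ℝ u x‖ + |r| * ‖fderiv ℝ f x‖ * ‖u x‖ := by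
  have hpos : 0 < |f x| := abs_pos.2 hx
  have hweight : |f x| ^ (r + 1) * |f x| ^ (-r) = |f x| := by
    rw [← Real.rpow_add hpos, add_neg_cancel_comm, Real.rpow_one]
  have hweight' : |f x| ^ (r + 1) * |f x| ^ (-r - 1) = 1 := by
    rw [← Real.rpow_add hpos, ← neg_add', add_neg_cancel, Real.rpow_zero]
  have hsign : |(SignType.sign (f x) : ℝ)| = 1 := by
    rcases hx.lt_or_gt with h | h <;> simp [h]
  rw [(hasFDerivAt_abs_rpow_smul hf.hasFDerivAt hu.hasFDerivAt hx (-r)).fderiv, smul_add]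
  refine (norm_add_le _ _).trans_eq (congrArg₂ (· + ·) ?_ ?_)
  · rw [smul_smul, hweight, norm_smul, Real.norm_eq_abs, abs_abs]
  · rw [norm_smul, ContinuousLinearMap.norm_smulRight_apply, norm_smul, norm_smul]
    simp only [Real.norm_eq_abs, abs_mul, abs_neg, hsign, Real.abs_rpow_of_nonneg hpos.le, abs_abs]
    linear_combination |r| * ‖fderiv ℝ f x‖ * ‖u x‖ * hweight'

theorem tendsto_abs_rpow_smul_fderiv_abs_rpow_neg_smul_zero (hf : ContDiffAt ℝ 1 f x)
    (hu : ContDiffAt ℝ 1 u x) (hfx : f x = 0) (hux : u x = 0) (r : ℝ) :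
    Tendsto (fun y => |f y| ^ (r + 1) • fderiv ℝ (fun z => |f z| ^ (-r) • u z) y)
      (𝓝[{y | f y ≠ 0}] x) (𝓝 0) := by
  have hbound : Tendsto (fun y => |f y| * ‖fderiv ℝ u y‖ + |r| * ‖fderiv ℝ f y‖ * ‖u y‖)
      (𝓝 x) (𝓝 0) := by
    have hfderiv_f : ContinuousAt (fderiv ℝ f) x := (hf.fderiv_right (m := 0) le_rfl).continuousAt
    have hfderiv_u : ContinuousAt (fderiv ℝ u) x := (hu.fderiv_right (m := 0) le_rfl).continuousAt
    have h := (hf.continuousAt.abs.tendsto.mul hfderiv_u.norm.tendsto).add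
      ((hfderiv_f.norm.tendsto.const_mul |r|).mul hu.continuousAt.norm.tendsto)
    simpa only [hfx, hux, abs_zero, norm_zero, zero_mul, mul_zero, add_zero] using h
  refine squeeze_zero_norm' ?_ (hbound.mono_left nhdsWithin_le_nhds)
  filter_upwards [self_mem_nhdsWithin, nhdsWithin_le_nhds (hf.eventually (by simp)),
    nhdsWithin_le_nhds (hu.eventually (by simp))] with y hy hfy huy
  exact norm_abs_rpow_smul_fderiv_abs_rpow_neg_smul_le (hfy.differentiableAt one_ne_zero)
    (huy.differentiableAt one_ne_zero) hy r

end Weight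

theorem abs_rpow_smul_abs_rpow_neg_smul {F : Type*} [AddCommGroup F] [Module ℝ F] {t : ℝ}
    (ht : t ≠ 0) (r : ℝ) (v : F) : |t| ^ r • |t| ^ (-r) • v = v := by
  rw [smul_smul, ← Real.rpow_add (abs_pos.2 ht), add_neg_cancel, Real.rpow_zero, one_smul]

theorem tendsto_abs_rpow_add_one_smul_zero {α F : Type*} [AddCommGroup F] [Module ℝ F]
    [TopologicalSpace F] [ContinuousSMul ℝ F] {l : Filter α} {f : α → ℝ} {g : α → F} {r : ℝ} {v : F}
    (hf : Tendsto f l (𝓝[≠] 0)) (hg : Tendsto (fun y => |f y| ^ r • g y) l (𝓝 v)) :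
    Tendsto (fun y => |f y| ^ (r + 1) • g y) l (𝓝 0) := by
  obtain ⟨hf_lim, hf_ne⟩ := tendsto_nhdsWithin_iff.1 hf
  have hlim := hf_lim.abs.smul hg
  rw [abs_zero, zero_smul] at hlim
  refine hlim.congr' ?_
  filter_upwards [hf_ne] with y hy
  rw [smul_smul, Real.rpow_add_one (abs_ne_zero.2 hy), mul_comm]

section ZeroSet

variable {X F : Type*} {Ω Γ : Set X} {f : X → ℝ} {x : X}

theorem ne_zero_of_mem_diff_zeroSet (hΓ : Γ = {x | x ∈ Ω ∧ f x = 0}) (hx : x ∈ Ω \ Γ) :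
    f x ≠ 0 :=
  fun h => hx.2 (hΓ.ge ⟨hx.1, h⟩)

variable [TopologicalSpace X]

theorem isOpen_diff_zeroSet (hΩ : IsOpen Ω) (hf : ContinuousOn f Ω)
    (hΓ : Γ = {x | x ∈ Ω ∧ f x = 0}) : IsOpen (Ω \ Γ) := by
  convert hf.isOpen_inter_preimage hΩ (isOpen_compl_singleton (x := 0)) using 1
  ext x
  simp [hΓ]

theorem tendsto_nhdsWithin_diff_zeroSet (hΩ : IsOpen Ω) (hf : ContinuousOn f Ω)
    (hΓ : Γ = {x | x ∈ Ω ∧ f x = 0}) (hx : x ∈ Γ) :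
    Tendsto f (𝓝[Ω \ Γ] x) (𝓝[≠] 0) := by
  obtain ⟨hxΩ, hfx⟩ := hΓ.le hx
  refine tendsto_nhdsWithin_iff.2 ⟨?_, ?_⟩
  · simpa only [hfx] using (hf.continuousAt (hΩ.mem_nhds hxΩ)).mono_left nhdsWithin_le_nhds
  · filter_upwards [self_mem_nhdsWithin] with y hy using ne_zero_of_mem_diff_zeroSet hΓ hy

theorem eventuallyEq_abs_rpow_neg_smul [SMul ℝ F] {V W : X → F} {r : ℝ} (hΩ : IsOpen Ω)
    (hf : ContinuousOn f Ω) (hΓ : Γ = {x | x ∈ Ω ∧ f x = 0})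
    (hW : ∀ x ∈ Ω \ Γ, W x = |f x| ^ (-r) • V x) (hx : x ∈ Ω \ Γ) :
    W =ᶠ[𝓝 x] fun y => |f y| ^ (-r) • V y :=
  Set.EqOn.eventuallyEq_of_mem hW ((isOpen_diff_zeroSet hΩ hf hΓ).mem_nhds hx)

theorem tendsto_abs_rpow_smul_of_eq_abs_rpow_neg_smul [AddCommGroup F] [Module ℝ F]
    [TopologicalSpace F] {V W : X → F} {r : ℝ} (hΩ : IsOpen Ω) (hV : ContinuousOn V Ω)
    (hΓ : Γ = {x | x ∈ Ω ∧ f x = 0}) (hW : ∀ x ∈ Ω \ Γ, W x = |f x| ^ (-r) • V x)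
    (hx : x ∈ Γ) : Tendsto (fun y => |f y| ^ r • W y) (𝓝[Ω \ Γ] x) (𝓝 (V x)) := by
  have hV_lim : Tendsto V (𝓝[Ω \ Γ] x) (𝓝 (V x)) :=
    (hV.continuousAt (hΩ.mem_nhds (hΓ.le hx).1)).mono_left nhdsWithin_le_nhds
  refine hV_lim.congr' ?_
  filter_upwards [self_mem_nhdsWithin] with y hy
  rw [hW y hy, abs_rpow_smul_abs_rpow_neg_smul (ne_zero_of_mem_diff_zeroSet hΓ hy)]

end ZeroSet

section RescaledField

variable {E F : Type*} [NormedAddCommGroup E] [NormedSpace ℝ E] [NormedAddCommGroup F]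
  [NormedSpace ℝ F] {Ω Γ : Set E} {f : E → ℝ} {V W : E → F} {r : ℝ} {x : E}

theorem differentiableAt_of_eq_abs_rpow_neg_smul (hΩ : IsOpen Ω) (hf : DifferentiableOn ℝ f Ω)
    (hΓ : Γ = {x | x ∈ Ω ∧ f x = 0}) (hV : DifferentiableOn ℝ V Ω)
    (hW : ∀ x ∈ Ω \ Γ, W x = |f x| ^ (-r) • V x) (hx : x ∈ Ω \ Γ) : DifferentiableAt ℝ W x :=
  have hΩx : Ω ∈ 𝓝 x := hΩ.mem_nhds hx.1
  (hasFDerivAt_abs_rpow_smul (hf.differentiableAt hΩx).hasFDerivAt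
    (hV.differentiableAt hΩx).hasFDerivAt (ne_zero_of_mem_diff_zeroSet hΓ hx)
    (-r)).differentiableAt.congr_of_eventuallyEq
    (eventuallyEq_abs_rpow_neg_smul hΩ hf.continuousOn hΓ hW hx)

theorem contDiffAt_of_eq_abs_rpow_neg_smul {k : ℕ∞} (hΩ : IsOpen Ω) (hf : ContDiffOn ℝ k f Ω)
    (hΓ : Γ = {x | x ∈ Ω ∧ f x = 0}) (hV : ContDiffOn ℝ k V Ω)
    (hW : ∀ x ∈ Ω \ Γ, W x = |f x| ^ (-r) • V x) (hx : x ∈ Ω \ Γ) : ContDiffAt ℝ k W x :=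
  have hΩx : Ω ∈ 𝓝 x := hΩ.mem_nhds hx.1
  (contDiffAt_abs_rpow_smul (hf.contDiffAt hΩx) (hV.contDiffAt hΩx)
    (ne_zero_of_mem_diff_zeroSet hΓ hx) (-r)).congr_of_eventuallyEq
    (eventuallyEq_abs_rpow_neg_smul hΩ hf.continuousOn hΓ hW hx)

theorem tendsto_abs_rpow_smul_fderiv_zero_of_eq_abs_rpow_neg_smul (hΩ : IsOpen Ω)
    (hf : ContDiffOn ℝ 1 f Ω) (hΓ : Γ = {x | x ∈ Ω ∧ f x = 0}) (hV : ContDiffOn ℝ 1 V Ω)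
    (hW : ∀ x ∈ Ω \ Γ, W x = |f x| ^ (-r) • V x) (hx : x ∈ Γ) (hVx : V x = 0) :
    Tendsto (fun y => |f y| ^ (r + 1) • fderiv ℝ W y) (𝓝[Ω \ Γ] x) (𝓝 0) := by
  obtain ⟨hxΩ, hfx⟩ := hΓ.le hx
  have hΩx : Ω ∈ 𝓝 x := hΩ.mem_nhds hxΩ
  have hlim := (tendsto_abs_rpow_smul_fderiv_abs_rpow_neg_smul_zero (hf.contDiffAt hΩx)
    (hV.contDiffAt hΩx) hfx hVx r).mono_left
    (nhdsWithin_mono x fun y hy => ne_zero_of_mem_diff_zeroSet hΓ hy)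
  refine hlim.congr' ?_
  filter_upwards [self_mem_nhdsWithin] with y hy
  rw [(eventuallyEq_abs_rpow_neg_smul hΩ hf.continuousOn hΓ hW hy).fderiv_eq]

end RescaledField

section Leibniz

variable {n : ℕ} {φ a b : (Fin n → ℝ) → ℝ} {u w W : (Fin n → ℝ) → (Fin n → ℝ)} {x : Fin n → ℝ}

theorem dotp_smul (c : ℝ) (v w : Fin n → ℝ) : dotp v (c • w) = c * dotp v w :=
  dotProduct_smul c v w

theorem dotp_zero (v : Fin n → ℝ) : dotp v 0 = 0 :=
  dotProduct_zero v

theorem tendsto_dotp {α : Type*} {l : Filter α} {u w : α → Fin n → ℝ} {v₁ v₂ : Fin n → ℝ}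
    (hu : Tendsto u l (𝓝 v₁)) (hw : Tendsto w l (𝓝 v₂)) :
    Tendsto (fun y => dotp (u y) (w y)) l (𝓝 (dotp v₁ v₂)) :=
  tendsto_finsetSum _ fun j _ => (tendsto_pi_nhds.1 hu j).mul (tendsto_pi_nhds.1 hw j)

theorem differentiableAt_dotp (hu : DifferentiableAt ℝ u x) (hw : DifferentiableAt ℝ w x) :
    DifferentiableAt ℝ (fun y => dotp (u y) (w y)) x :=
  .fun_sum fun j _ => (differentiableAt_pi.1 hu j).mul (differentiableAt_pi.1 hw j)

theorem pderiv'_add (ha : DifferentiableAt ℝ a x) (hb : DifferentiableAt ℝ b x) (i : Fin n) :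
    pderiv' (fun y => a y + b y) i x = pderiv' a i x + pderiv' b i x := by
  simp only [pderiv', fderiv_fun_add ha hb, add_apply]

theorem pderiv'_mul (ha : DifferentiableAt ℝ a x) (hb : DifferentiableAt ℝ b x) (i : Fin n) :
    pderiv' (fun y => a y * b y) i x = a x * pderiv' b i x + pderiv' a i x * b x := by
  simp only [pderiv', fderiv_fun_mul ha hb, add_apply, smul_apply, smul_eq_mul, mul_comm]

theorem pderiv'_apply (hu : DifferentiableAt ℝ u x) (i j : Fin n) :
    pderiv' (fun y => u y j) i x = fderiv ℝ u x (Pi.single i 1) j := by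
  rw [pderiv', fderiv_apply hu j]
  rfl

theorem pderiv'_dotp (hu : DifferentiableAt ℝ u x) (hw : DifferentiableAt ℝ w x) (i : Fin n) :
    pderiv' (fun y => dotp (u y) (w y)) i x =
      dotp (u x) (fderiv ℝ w x (Pi.single i 1)) + dotp (fderiv ℝ u x (Pi.single i 1)) (w x) := by
  have hu' := differentiableAt_pi.1 hu
  have hw' := differentiableAt_pi.1 hw
  simp only [dotp, ← Finset.sum_add_distrib, ← pderiv'_apply hu, ← pderiv'_apply hw,
    ← pderiv'_mul (hu' _) (hw' _)]
  simp only [pderiv', fderiv_fun_sum fun j _ => (hu' j).fun_mul (hw' j), sum_apply]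

theorem contDiffAt_pderiv' {k m : WithTop ℕ∞} (ha : ContDiffAt ℝ k a x) (hmk : m + 1 ≤ k)
    (i : Fin n) : ContDiffAt ℝ m (pderiv' a i) x :=
  (ha.fderiv_right hmk).clm_apply contDiffAt_const

theorem contDiffAt_grad' {k m : WithTop ℕ∞} (ha : ContDiffAt ℝ k a x) (hmk : m + 1 ≤ k) :
    ContDiffAt ℝ m (grad' a) x :=
  contDiffAt_pi.2 fun i => contDiffAt_pderiv' ha hmk i

theorem contDiffAt_diverg {k m : WithTop ℕ∞} (hW : ContDiffAt ℝ k W x) (hmk : m + 1 ≤ k) :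
    ContDiffAt ℝ m (diverg W) x :=
  ContDiffAt.sum fun j _ => contDiffAt_pderiv' (contDiffAt_pi.1 hW j) hmk j

theorem diverg_smul_s6 (hφ : DifferentiableAt ℝ φ x) (hW : DifferentiableAt ℝ W x) :
    diverg (fun y => φ y • W y) x = φ x * diverg W x + dotp (grad' φ x) (W x) := by
  simp only [diverg, dotp, grad', Finset.mul_sum, ← Finset.sum_add_distrib]
  exact Finset.sum_congr rfl fun j _ => pderiv'_mul hφ (differentiableAt_pi.1 hW j) j

theorem pderiv'_diverg_smul (hφ : ContDiffAt ℝ 2 φ x) (hW : ContDiffAt ℝ 2 W x) (i : Fin n) :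
    pderiv' (diverg fun y => φ y • W y) i x =
      φ x * pderiv' (diverg W) i x + pderiv' φ i x * diverg W x +
        (dotp (grad' φ x) (fderiv ℝ W x (Pi.single i 1)) +
          dotp (fderiv ℝ (grad' φ) x (Pi.single i 1)) (W x)) := by
  have hφ' : DifferentiableAt ℝ φ x := hφ.differentiableAt two_ne_zero
  have hW' : DifferentiableAt ℝ W x := hW.differentiableAt two_ne_zero
  have hgrad : DifferentiableAt ℝ (grad' φ) x :=
    (contDiffAt_grad' hφ one_add_one_eq_two.le).differentiableAt one_ne_zero
  have hdiv : DifferentiableAt ℝ (diverg W) x :=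
    (contDiffAt_diverg hW one_add_one_eq_two.le).differentiableAt one_ne_zero
  have hleibniz : (diverg fun y => φ y • W y) =ᶠ[𝓝 x]
      fun y => φ y * diverg W y + dotp (grad' φ y) (W y) := by
    filter_upwards [hφ.eventually (by simp), hW.eventually (by simp)] with y hφy hWy
    exact diverg_smul_s6 (hφy.differentiableAt two_ne_zero) (hWy.differentiableAt two_ne_zero)
  rw [← pderiv'_dotp hgrad hW', ← pderiv'_mul hφ' hdiv,
    ← pderiv'_add (hφ'.fun_mul hdiv) (differentiableAt_dotp hgrad hW'), pderiv',
    hleibniz.fderiv_eq, pderiv']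

end Leibniz

section WeightedLimits

variable {n : ℕ} {c φ : (Fin n → ℝ) → ℝ} {W : (Fin n → ℝ) → (Fin n → ℝ)} {x : Fin n → ℝ}
  {l : Filter (Fin n → ℝ)}

theorem tendsto_mul_diverg_smul_zero (hl : l ≤ 𝓝 x) (hφ : ContDiffAt ℝ 1 φ x)
    (hW : ∀ᶠ y in l, DifferentiableAt ℝ W y) (hcW : Tendsto (fun y => c y • W y) l (𝓝 0))
    (hcdiv : Tendsto (fun y => c y * diverg W y) l (𝓝 0)) :
    Tendsto (fun y => c y * diverg (fun z => φ z • W z) y) l (𝓝 0) := by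
  have hφ_lim : Tendsto φ l (𝓝 (φ x)) := hφ.continuousAt.mono_left hl
  have hgrad_lim : Tendsto (grad' φ) l (𝓝 (grad' φ x)) :=
    (contDiffAt_grad' (m := 0) hφ le_rfl).continuousAt.mono_left hl
  have hlim := (hφ_lim.mul hcdiv).add (tendsto_dotp hgrad_lim hcW)
  rw [mul_zero, dotp_zero, add_zero] at hlim
  refine hlim.congr' ?_
  filter_upwards [hW, hl (hφ.eventually (by simp))] with y hWy hφy
  rw [diverg_smul_s6 (hφy.differentiableAt one_ne_zero) hWy, dotp_smul]
  ring

theorem tendsto_mul_pderiv'_diverg_smul_zero (hl : l ≤ 𝓝 x) (hφ : ContDiffAt ℝ 2 φ x)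
    (hW : ∀ᶠ y in l, ContDiffAt ℝ 2 W y) (hcW : Tendsto (fun y => c y • W y) l (𝓝 0))
    (hcdiv : Tendsto (fun y => c y * diverg W y) l (𝓝 0)) {i : Fin n}
    (hcW' : Tendsto (fun y => c y • fderiv ℝ W y (Pi.single i 1)) l (𝓝 0))
    (hcdiv' : Tendsto (fun y => c y * pderiv' (diverg W) i y) l (𝓝 0)) :
    Tendsto (fun y => c y * pderiv' (diverg fun z => φ z • W z) i y) l (𝓝 0) := by
  have hgrad : ContDiffAt ℝ 1 (grad' φ) x := contDiffAt_grad' hφ one_add_one_eq_two.le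
  have hφ_lim : Tendsto φ l (𝓝 (φ x)) := hφ.continuousAt.mono_left hl
  have hpderiv_lim : Tendsto (pderiv' φ i) l (𝓝 (pderiv' φ i x)) :=
    (contDiffAt_pderiv' hφ one_add_one_eq_two.le i).continuousAt.mono_left hl
  have hgrad_lim : Tendsto (grad' φ) l (𝓝 (grad' φ x)) := hgrad.continuousAt.mono_left hl
  have hgrad'_lim : Tendsto (fun y => fderiv ℝ (grad' φ) y (Pi.single i 1)) l
      (𝓝 (fderiv ℝ (grad' φ) x (Pi.single i 1))) :=
    ((hgrad.fderiv_right (m := 0) le_rfl).clm_apply contDiffAt_const).continuousAt.mono_left hl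
  have hlim := ((hφ_lim.mul hcdiv').add (hpderiv_lim.mul hcdiv)).add
    ((tendsto_dotp hgrad_lim hcW').add (tendsto_dotp hgrad'_lim hcW))
  simp only [mul_zero, dotp_zero, add_zero] at hlim
  refine hlim.congr' ?_
  filter_upwards [hW, hl (hφ.eventually (by simp))] with y hWy hφy
  rw [pderiv'_diverg_smul hφy hWy, dotp_smul, dotp_smul]
  ring

end WeightedLimits

section Conditions

variable {n : ℕ} {Ω Γ : Set (Fin n → ℝ)} {f φ : (Fin n → ℝ) → ℝ}
  {V W : (Fin n → ℝ) → (Fin n → ℝ)} {r : ℝ}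

theorem CondA.smul (hA : CondA Ω Γ f r W) (hΩ : IsOpen Ω) (hf : DifferentiableOn ℝ f Ω)
    (hΓ : Γ = {x | x ∈ Ω ∧ f x = 0}) (hV : DifferentiableOn ℝ V Ω)
    (hW : ∀ x ∈ Ω \ Γ, W x = |f x| ^ (-r) • V x) (hφ : ContDiffOn ℝ 1 φ Ω) :
    CondA Ω Γ f r (fun x => φ x • W x) := by
  intro x hx
  have hW_diff : ∀ᶠ y in 𝓝[Ω \ Γ] x, DifferentiableAt ℝ W y := by
    filter_upwards [self_mem_nhdsWithin] with y hy
    exact differentiableAt_of_eq_abs_rpow_neg_smul hΩ hf hΓ hV hW hy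
  exact tendsto_mul_diverg_smul_zero nhdsWithin_le_nhds
    (hφ.contDiffAt (hΩ.mem_nhds (hΓ.le hx).1)) hW_diff
    (tendsto_abs_rpow_add_one_smul_zero
      (tendsto_nhdsWithin_diff_zeroSet hΩ hf.continuousOn hΓ hx)
      (tendsto_abs_rpow_smul_of_eq_abs_rpow_neg_smul hΩ hV.continuousOn hΓ hW hx)) (hA x hx)

theorem CondB.smul (hB : CondB Ω Γ f r V W) (hΩ : IsOpen Ω) (hf : ContDiffOn ℝ 2 f Ω)
    (hΓ : Γ = {x | x ∈ Ω ∧ f x = 0}) (hV : ContDiffOn ℝ 2 V Ω)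
    (hW : ∀ x ∈ Ω \ Γ, W x = |f x| ^ (-r) • V x) (hφ : ContDiffOn ℝ 2 φ Ω)
    (hφ0 : ∀ x ∈ Γ, φ x ≠ 0) :
    CondB Ω Γ f r (fun x => φ x • V x) (fun x => φ x • W x) := by
  intro x hx hφVx
  have hVx : V x = 0 := (smul_eq_zero.1 hφVx).resolve_left (hφ0 x hx)
  obtain ⟨hdiv, hdiv'⟩ := hB x hx hVx
  have hφx : ContDiffAt ℝ 2 φ x := hφ.contDiffAt (hΩ.mem_nhds (hΓ.le hx).1)
  have hf_lim : Tendsto f (𝓝[Ω \ Γ] x) (𝓝[≠] 0) :=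
    tendsto_nhdsWithin_diff_zeroSet hΩ hf.continuousOn hΓ hx
  have hW_smooth : ∀ᶠ y in 𝓝[Ω \ Γ] x, ContDiffAt ℝ 2 W y := by
    filter_upwards [self_mem_nhdsWithin] with y hy
    exact contDiffAt_of_eq_abs_rpow_neg_smul hΩ hf hΓ hV hW hy
  have hW_lim : Tendsto (fun y => |f y| ^ r • W y) (𝓝[Ω \ Γ] x) (𝓝 0) :=
    hVx ▸ tendsto_abs_rpow_smul_of_eq_abs_rpow_neg_smul hΩ hV.continuousOn hΓ hW hx
  have hW'_lim : ∀ v, Tendsto (fun y => |f y| ^ (r + 1) • fderiv ℝ W y v) (𝓝[Ω \ Γ] x) (𝓝 0) :=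
    fun v => ((continuous_eval_const v).tendsto 0).comp
      (tendsto_abs_rpow_smul_fderiv_zero_of_eq_abs_rpow_neg_smul hΩ (hf.of_le one_le_two) hΓ
        (hV.of_le one_le_two) hW hx hVx)
  refine ⟨?_, fun i => ?_⟩
  · exact tendsto_mul_diverg_smul_zero nhdsWithin_le_nhds (hφx.of_le one_le_two)
      (hW_smooth.mono fun y hy => hy.differentiableAt two_ne_zero) hW_lim hdiv
  · exact tendsto_mul_pderiv'_diverg_smul_zero nhdsWithin_le_nhds hφx hW_smooth
      (tendsto_abs_rpow_add_one_smul_zero hf_lim hW_lim)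
      (tendsto_abs_rpow_add_one_smul_zero hf_lim hdiv) (hW'_lim _) (hdiv' i)

end Conditions

theorem stmt6_general {n : ℕ} (Ω Γ : Set (Fin n → ℝ)) (hΩ : IsOpen Ω)
    (f : (Fin n → ℝ) → ℝ) (hf : ContDiffOn ℝ 2 f Ω) (hΓ : Γ = {x | x ∈ Ω ∧ f x = 0})
    (V : (Fin n → ℝ) → (Fin n → ℝ)) (hV : ContDiffOn ℝ 2 V Ω) (r : ℝ)
    (W : (Fin n → ℝ) → (Fin n → ℝ)) (hW : ∀ x ∈ Ω \ Γ, W x = |f x| ^ (-r) • V x)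
    (φ : (Fin n → ℝ) → ℝ) (hφ : ContDiffOn ℝ 2 φ Ω) (hφ0 : ∀ x ∈ Γ, φ x ≠ 0)
    (hA : CondA Ω Γ f r W) (hB : CondB Ω Γ f r V W) :
    CondA Ω Γ f r (fun x => φ x • W x) ∧
    CondB Ω Γ f r (fun x => φ x • V x) (fun x => φ x • W x) :=
  ⟨hA.smul hΩ (hf.differentiableOn two_ne_zero) hΓ (hV.differentiableOn two_ne_zero) hW
    (hφ.of_le one_le_two), hB.smul hΩ hf hΓ hV hW hφ hφ0⟩

/-- Conditions (A) and (B) are invariant with respect to multiplication of the vector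
fields `V` and `W = |f|^{−r} V` by a nonvanishing `C^s` scalar factor `φ`. -/
theorem stmt6 {n : ℕ} (hn : 2 ≤ n) (Ω Γ : Set (Fin n → ℝ)) (hΩ : IsOpen Ω)
    (f : (Fin n → ℝ) → ℝ) (s : ℕ) (hs : 2 ≤ s) (hf : ContDiffOn ℝ s f Ω)
    (hΓ : Γ = {x | x ∈ Ω ∧ f x = 0}) (hΓne : Γ.Nonempty)
    (hreg : ∀ x ∈ Γ, grad' f x ≠ 0)
    (V : (Fin n → ℝ) → (Fin n → ℝ)) (hV : ContDiffOn ℝ s V Ω)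
    (r : ℝ) (hr : 0 < r)
    (W : (Fin n → ℝ) → (Fin n → ℝ))
    (hW : ∀ x ∈ Ω \ Γ, W x = |f x| ^ (-r) • V x)
    (φ : (Fin n → ℝ) → ℝ) (hφ : ContDiffOn ℝ s φ Ω) (hφ0 : ∀ x ∈ Ω, φ x ≠ 0)
    (hA : CondA Ω Γ f r W) (hB : CondB Ω Γ f r V W) :
    CondA Ω Γ f r (fun x => φ x • W x) ∧
    CondB Ω Γ f r (fun x => φ x • V x) (fun x => φ x • W x) := by
  have hs' : (2 : WithTop ℕ∞) ≤ s := by exact_mod_cast hs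
  exact stmt6_general Ω Γ hΩ f (hf.of_le hs') hΓ V (hV.of_le hs') r W hW φ (hφ.of_le hs')
    (fun x hx => hφ0 x (hΓ.le hx).1) hA hB
end
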